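/- Let a > 0 be real and let s ∈ ℂ with Re(s) > 0. Then the function x ↦ (1/(a γ(a,x)) − x^{-a}) · x^{s+a-2} e^{-x} is (Lebesgue) integrable on (0, ∞). -/

import Mathlib

/-!
In the prefactor `1 / (a γ(a,x)) - x^(-a)` the leading singularities at `0` cancel.
Since `e^(-x) ≤ e^(-t) ≤ 1` on `(0, x)`, one has `e^(-x) x^a ≤ a γ(a,x) ≤ x^a`
(`exp_mul_rpow_le`, `mul_lowerGamma_le`), hence
`0 ≤ (1 / (a γ(a,x)) - x^(-a)) e^(-x) ≤ x^(-a) (1 - e^(-x)) ≤ x^(1-a)`,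
which bounds the integrand by `x^(Re s - 1)` near `0`. For `x ≥ 1`, monotonicity of `γ(a, ·)` bounds
the prefactor by the constant `1 / (a γ(a,1))`. Both regimes are dominated by integrands of
Gamma integrals, with parameters `Re s` and `Re s + a`.
-/

open MeasureTheory Set

/-- The lower incomplete gamma function `γ(a, x) = ∫₀ˣ t^(a-1) e^(-t) dt`. -/
noncomputable def lowerGamma (a x : ℝ) : ℝ :=
  ∫ t in Set.Ioo (0 : ℝ) x, t ^ (a - 1) * Real.exp (-t)

/-- The domain `D = ℂ \ {1, 0, -1, -2, …}` of the analytic continuation. -/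
def fhzDomain : Set ℂ := {s : ℂ | ∀ n : ℕ, s ≠ 1 - (n : ℂ)}

lemma lowerGamma_integrableOn {a : ℝ} (ha : 0 < a) :
    IntegrableOn (fun t : ℝ => t ^ (a - 1) * Real.exp (-t)) (Ioi 0) := by
  simpa only [mul_comm] using Real.GammaIntegral_convergent ha

lemma lowerGamma_monotone {a : ℝ} (ha : 0 < a) : Monotone (lowerGamma a) := by
  intro x y hxy
  refine setIntegral_mono_set ((lowerGamma_integrableOn ha).mono_set Ioo_subset_Ioi_self) ?_
    (Ioo_subset_Ioo_right hxy).eventuallyLE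
  filter_upwards [ae_restrict_mem measurableSet_Ioo] with t ht
  exact mul_nonneg (Real.rpow_nonneg ht.1.le _) (Real.exp_nonneg _)

lemma integrableOn_Ioo_rpow_sub_one {a : ℝ} (ha : 0 < a) {x : ℝ} (hx : 0 < x) :
    IntegrableOn (fun t : ℝ => t ^ (a - 1)) (Ioo 0 x) :=
  ((intervalIntegrable_iff_integrableOn_Ioc_of_le hx.le).1
    (intervalIntegral.intervalIntegrable_rpow' (by linarith))).mono_set Ioo_subset_Ioc_self

lemma integral_Ioo_rpow_sub_one {a : ℝ} (ha : 0 < a) {x : ℝ} (hx : 0 < x) :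
    ∫ t in Ioo (0 : ℝ) x, t ^ (a - 1) = x ^ a / a := by
  rw [← integral_Ioc_eq_integral_Ioo, ← intervalIntegral.integral_of_le hx.le,
    integral_rpow (Or.inl (by linarith))]
  simp [Real.zero_rpow ha.ne']

lemma mul_lowerGamma_le {a : ℝ} (ha : 0 < a) {x : ℝ} (hx : 0 < x) :
    a * lowerGamma a x ≤ x ^ a := by
  have h : lowerGamma a x ≤ x ^ a / a := by
    rw [← integral_Ioo_rpow_sub_one ha hx]
    refine setIntegral_mono_on ((lowerGamma_integrableOn ha).mono_set Ioo_subset_Ioi_self)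
      (integrableOn_Ioo_rpow_sub_one ha hx) measurableSet_Ioo fun t ht => ?_
    exact mul_le_of_le_one_right (Real.rpow_nonneg ht.1.le _)
      (Real.exp_le_one_iff.2 (by linarith [ht.1]))
  rwa [le_div_iff₀' ha] at h

lemma exp_mul_rpow_le {a : ℝ} (ha : 0 < a) {x : ℝ} (hx : 0 < x) :
    Real.exp (-x) * x ^ a ≤ a * lowerGamma a x := by
  have h : x ^ a / a * Real.exp (-x) ≤ lowerGamma a x := by
    rw [← integral_Ioo_rpow_sub_one ha hx, ← integral_mul_const]
    refine setIntegral_mono_on ((integrableOn_Ioo_rpow_sub_one ha hx).mul_const _)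
      ((lowerGamma_integrableOn ha).mono_set Ioo_subset_Ioi_self) measurableSet_Ioo fun t ht => ?_
    exact mul_le_mul_of_nonneg_left (Real.exp_le_exp.2 (by linarith [ht.2]))
      (Real.rpow_nonneg ht.1.le _)
  calc Real.exp (-x) * x ^ a = a * (x ^ a / a * Real.exp (-x)) := by field_simp
    _ ≤ _ := mul_le_mul_of_nonneg_left h ha.le

lemma mul_lowerGamma_pos {a : ℝ} (ha : 0 < a) {x : ℝ} (hx : 0 < x) : 0 < a * lowerGamma a x :=
  (mul_pos (Real.exp_pos _) (Real.rpow_pos_of_pos hx a)).trans_le (exp_mul_rpow_le ha hx)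

lemma prefactor_nonneg {a : ℝ} (ha : 0 < a) {x : ℝ} (hx : 0 < x) :
    0 ≤ 1 / (a * lowerGamma a x) - x ^ (-a) := by
  rw [Real.rpow_neg hx.le, ← one_div, sub_nonneg]
  exact one_div_le_one_div_of_le (mul_lowerGamma_pos ha hx) (mul_lowerGamma_le ha hx)

/-- The cancellation at `0`: the prefactor is `O(x^(1-a))` there. -/
lemma prefactor_mul_exp_le {a : ℝ} (ha : 0 < a) {x : ℝ} (hx : 0 < x) :
    (1 / (a * lowerGamma a x) - x ^ (-a)) * Real.exp (-x) ≤ x ^ (-a) * x := by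
  have hxa := Real.rpow_pos_of_pos hx a
  have h1 : 1 / (a * lowerGamma a x) * Real.exp (-x) ≤ x ^ (-a) := by
    rw [Real.rpow_neg hx.le, one_div_mul_eq_div, div_le_iff₀ (mul_lowerGamma_pos ha hx),
      ← div_eq_inv_mul, le_div_iff₀ hxa]
    exact exp_mul_rpow_le ha hx
  have h2 : 1 - Real.exp (-x) ≤ x := by linarith [Real.add_one_le_exp (-x)]
  nlinarith [mul_le_mul_of_nonneg_left h2 (Real.rpow_nonneg hx.le (-a))]

lemma prefactor_le_of_one_le {a : ℝ} (ha : 0 < a) {x : ℝ} (hx : 1 ≤ x) :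
    1 / (a * lowerGamma a x) - x ^ (-a) ≤ 1 / (a * lowerGamma a 1) := by
  have h := one_div_le_one_div_of_le (mul_lowerGamma_pos ha one_pos)
    (mul_le_mul_of_nonneg_left (lowerGamma_monotone ha hx) ha.le)
  linarith [Real.rpow_nonneg (zero_le_one.trans hx) (-a)]

theorem stmt_9 (a : ℝ) (ha : 0 < a) (s : ℂ) (hs : 0 < s.re) :
    MeasureTheory.IntegrableOn
      (fun x : ℝ =>
        ((1 / (a * lowerGamma a x) - x ^ (-a) : ℝ) : ℂ) *
          (x : ℂ) ^ (s + (a : ℂ) - 2) * (Real.exp (-x) : ℂ))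
      (Set.Ioi (0 : ℝ)) := by
  have hmeas : Measurable (lowerGamma a) := (lowerGamma_monotone ha).measurable
  have hdom := ((Real.GammaIntegral_convergent hs).const_mul (Real.exp 1)).add
    ((Real.GammaIntegral_convergent (add_pos hs ha)).const_mul (1 / (a * lowerGamma a 1)))
  refine Integrable.mono' hdom (Measurable.aestronglyMeasurable (by fun_prop)) ?_
  filter_upwards [ae_restrict_mem measurableSet_Ioi] with x hx
  have hx : 0 < x := hx
  have hC := mul_lowerGamma_pos ha one_pos
  rw [norm_mul, norm_mul, Complex.norm_real, Complex.norm_real,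
    Complex.norm_cpow_eq_rpow_re_of_pos hx, Real.norm_of_nonneg (prefactor_nonneg ha hx),
    Real.norm_of_nonneg (Real.exp_nonneg _)]
  have hre : (s + (a : ℂ) - 2).re = s.re + a - 2 := by simp
  rw [hre]
  simp only [Pi.add_apply]
  have hp := Real.rpow_nonneg hx.le (s.re + a - 2)
  rcases le_total x 1 with h1 | h1
  · refine le_add_of_le_of_nonneg ?_ (by positivity)
    calc (1 / (a * lowerGamma a x) - x ^ (-a)) * x ^ (s.re + a - 2) * Real.exp (-x)
        = (1 / (a * lowerGamma a x) - x ^ (-a)) * Real.exp (-x) * x ^ (s.re + a - 2) := by ring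
      _ ≤ x ^ (-a) * x * x ^ (s.re + a - 2) :=
          mul_le_mul_of_nonneg_right (prefactor_mul_exp_le ha hx) hp
      _ = x ^ (s.re - 1) := by
          rw [← Real.rpow_add_one hx.ne', ← Real.rpow_add hx]
          congr 1; ring
      _ ≤ Real.exp (1 + -x) * x ^ (s.re - 1) :=
          le_mul_of_one_le_left (by positivity) (Real.one_le_exp (by linarith))
      _ = Real.exp 1 * (Real.exp (-x) * x ^ (s.re - 1)) := by rw [Real.exp_add, mul_assoc]
  · refine le_add_of_nonneg_of_le (by positivity) ?_
    calc (1 / (a * lowerGamma a x) - x ^ (-a)) * x ^ (s.re + a - 2) * Real.exp (-x)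
        ≤ 1 / (a * lowerGamma a 1) * x ^ (s.re + a - 1) * Real.exp (-x) := by
          have hle : x ^ (s.re + a - 2) ≤ x ^ (s.re + a - 1) :=
            Real.rpow_le_rpow_of_exponent_le h1 (by linarith)
          exact mul_le_mul_of_nonneg_right
            (mul_le_mul (prefactor_le_of_one_le ha h1) hle hp (by positivity)) (Real.exp_nonneg _)
      _ = 1 / (a * lowerGamma a 1) * (Real.exp (-x) * x ^ (s.re + a - 1)) := by ring
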